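/- arXiv:1009.5479 — 2 statements merged into one kernel-verified Lean document; each statement's English description precedes it below -/
import Mathlib

section
/- Let (A, Ω, T, ∗, { }, { }_Ω) and (A', Ω', T', ∗', { }', { }'_Ω) be vertex algebroids over ℂ, let φ: (A, Ω, T) → (A', Ω', T') be a morphism of extended Lie algebroids, let Δ: T → Ω' be a ℂ-linear map, and let S ⊆ T be a subset that is closed under the Lie bracket [ ] and spans T as an A-module. If the three morphism equations (i) φf ∗' φX − φ(f∗X) = Δ(fX) − (φf)Δ(X), (ii) {φX, φY}' − φ{X,Y} = −Δ(X)(φY) − Δ(Y)(φX), (iii) {φX, φY}'_Ω − φ{X,Y}_Ω = −L_{φX}Δ(Y) + L_{φY}Δ(X) − d(Δ(X)(φY)) + Δ([X,Y]) hold for all (f, X, Y) ∈ A × S × S, then they hold for all (f, X, Y) ∈ A × T × T, and hence (φ, Δ) is a morphism between the two vertex algebroids. -/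
universe u v w u' v' w' u'' v'' w''

/-- An extended Lie algebroid over ℂ, on carrier types `A` (functions),
`Ω` (1-forms) and `T` (vector fields). -/
structure ExtLieAlgebroid (A : Type u) (Ω : Type v) (T : Type w)
    [CommRing A] [Algebra ℂ A]
    [AddCommGroup Ω] [Module ℂ Ω] [Module A Ω] [IsScalarTower ℂ A Ω]
    [AddCommGroup T] [Module ℂ T] [Module A T] [IsScalarTower ℂ A T] where
  /-- the derivation `d : A → Ω` (ℂ-linear) -/
  d : A →ₗ[ℂ] Ω
  d_mul : ∀ f g : A, d (f * g) = f • d g + g • d f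
  /-- the image of `d` generates `Ω` as an `A`-module -/
  d_span : ∀ ω : Ω, ω ∈ Submodule.span A (Set.range d)
  /-- the Lie bracket on `T` -/
  bracket : T → T → T
  bracket_add_left : ∀ X Y Z, bracket (X + Y) Z = bracket X Z + bracket Y Z
  bracket_add_right : ∀ X Y Z, bracket X (Y + Z) = bracket X Y + bracket X Z
  bracket_smulC_left : ∀ (c : ℂ) (X Y), bracket (c • X) Y = c • bracket X Y
  bracket_smulC_right : ∀ (c : ℂ) (X Y), bracket X (c • Y) = c • bracket X Y
  bracket_skew : ∀ X Y, bracket X Y = - bracket Y X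
  bracket_jacobi : ∀ X Y Z,
    bracket X (bracket Y Z) = bracket (bracket X Y) Z + bracket Y (bracket X Z)
  /-- the action of `T` on `A` by derivations, `X ↦ (f ↦ Xf)`; it is `A`-linear in `X` -/
  act : T → A → A
  act_add_left : ∀ X Y f, act (X + Y) f = act X f + act Y f
  act_smulA_left : ∀ (f : A) (X) (g), act (f • X) g = f * act X g
  act_add_right : ∀ X f g, act X (f + g) = act X f + act X g
  act_smulC_right : ∀ (X) (c : ℂ) (f), act X (c • f) = c • act X f
  act_mul : ∀ X f g, act X (f * g) = f * act X g + g * act X f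
  act_bracket : ∀ X Y f, act (bracket X Y) f = act X (act Y f) - act Y (act X f)
  /-- the ℂ-linear Lie algebra action `X ↦ L_X` of `T` on `Ω` -/
  lie : T → Ω → Ω
  lie_add_left : ∀ X Y α, lie (X + Y) α = lie X α + lie Y α
  lie_smulC_left : ∀ (c : ℂ) (X) (α), lie (c • X) α = c • lie X α
  lie_add_right : ∀ X α β, lie X (α + β) = lie X α + lie X β
  lie_smulC_right : ∀ (X) (c : ℂ) (α), lie X (c • α) = c • lie X α
  lie_bracket : ∀ X Y α, lie (bracket X Y) α = lie X (lie Y α) - lie Y (lie X α)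
  /-- the `A`-bilinear pairing `(α, X) ↦ α(X)` -/
  pair : Ω → T → A
  pair_add_left : ∀ α β X, pair (α + β) X = pair α X + pair β X
  pair_smulA_left : ∀ (f : A) (α X), pair (f • α) X = f * pair α X
  pair_add_right : ∀ α X Y, pair α (X + Y) = pair α X + pair α Y
  pair_smulA_right : ∀ (f : A) (α X), pair α (f • X) = f * pair α X
  /-- the `T`-action on `Ω` commutes with `d` (together with `act_smulC_right`,
  the `T`-action on `A` commutes with `d` as well) -/
  lie_d : ∀ X f, lie X (d f) = d (act X f)
  /-- Leibniz rule for the `T`-action on `Ω` -/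
  lie_smulA : ∀ (X) (f : A) (α), lie X (f • α) = f • lie X α + act X f • α
  /-- Leibniz rule for the `T`-action on `T` -/
  bracket_smulA_right : ∀ (X) (f : A) (Y),
    bracket X (f • Y) = f • bracket X Y + act X f • Y
  /-- `df(X) = Xf` -/
  pair_d : ∀ f X, pair (d f) X = act X f

variable {A : Type u} {Ω : Type v} {T : Type w}
  [CommRing A] [Algebra ℂ A]
  [AddCommGroup Ω] [Module ℂ Ω] [Module A Ω] [IsScalarTower ℂ A Ω]
  [AddCommGroup T] [Module ℂ T] [Module A T] [IsScalarTower ℂ A T]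
  {A' : Type u'} {Ω' : Type v'} {T' : Type w'}
  [CommRing A'] [Algebra ℂ A']
  [AddCommGroup Ω'] [Module ℂ Ω'] [Module A' Ω'] [IsScalarTower ℂ A' Ω']
  [AddCommGroup T'] [Module ℂ T'] [Module A' T'] [IsScalarTower ℂ A' T']

/-- The property, for ℂ-bilinear operations `(∗, { }, { }_Ω)` on an extended Lie
algebroid, of forming a vertex algebroid (axioms (1)–(7)). -/
structure IsVertexAlgebroid (E : ExtLieAlgebroid A Ω T)
    (star : A → T → Ω) (br : T → T → A) (brΩ : T → T → Ω) : Prop where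
  star_add_left : ∀ f g X, star (f + g) X = star f X + star g X
  star_smulC_left : ∀ (c : ℂ) (f X), star (c • f) X = c • star f X
  star_add_right : ∀ f X Y, star f (X + Y) = star f X + star f Y
  star_smulC_right : ∀ (f) (c : ℂ) (X), star f (c • X) = c • star f X
  br_add_left : ∀ X Y Z, br (X + Y) Z = br X Z + br Y Z
  br_smulC_left : ∀ (c : ℂ) (X Y), br (c • X) Y = c • br X Y
  br_add_right : ∀ X Y Z, br X (Y + Z) = br X Y + br X Z
  br_smulC_right : ∀ (X) (c : ℂ) (Y), br X (c • Y) = c • br X Y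
  brΩ_add_left : ∀ X Y Z, brΩ (X + Y) Z = brΩ X Z + brΩ Y Z
  brΩ_smulC_left : ∀ (c : ℂ) (X Y), brΩ (c • X) Y = c • brΩ X Y
  brΩ_add_right : ∀ X Y Z, brΩ X (Y + Z) = brΩ X Y + brΩ X Z
  brΩ_smulC_right : ∀ (X) (c : ℂ) (Y), brΩ X (c • Y) = c • brΩ X Y
  ax1 : ∀ X Y, br X Y = br Y X
  ax2 : ∀ X Y, E.d (br X Y) = brΩ X Y + brΩ Y X
  ax3 : ∀ f g X, star (f * g) X - star f (g • X) - f • star g X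
    = -(E.act X f) • E.d g - (E.act X g) • E.d f
  ax4 : ∀ (f : A) (X Y), br X (f • Y) - f * br X Y
    = - E.pair (star f Y) X - E.act Y (E.act X f)
  ax5 : ∀ (f : A) (X Y), brΩ X (f • Y) - f • brΩ X Y
    = - E.lie X (star f Y) + star (E.act X f) Y + star f (E.bracket X Y)
  ax6 : ∀ X Y Z, E.act X (br Y Z) - br (E.bracket X Y) Z - br Y (E.bracket X Z)
    = E.pair (brΩ X Y) Z + E.pair (brΩ X Z) Y
  ax7 : ∀ X Y Z,
    E.lie X (brΩ Y Z) - E.lie Y (brΩ X Z) + E.lie Z (brΩ X Y)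
      + brΩ X (E.bracket Y Z) - brΩ Y (E.bracket X Z) - brΩ (E.bracket X Y) Z
    = E.d (E.pair (brΩ X Y) Z)

/-- A triple of maps `(fA, fΩ, fT)` is a morphism of extended Lie algebroids if it
respects all of the structure. -/
structure IsExtLieAlgebroidHom (E : ExtLieAlgebroid A Ω T) (E' : ExtLieAlgebroid A' Ω' T')
    (fA : A → A') (fΩ : Ω → Ω') (fT : T → T') : Prop where
  fA_one : fA 1 = 1
  fA_add : ∀ f g, fA (f + g) = fA f + fA g
  fA_mul : ∀ f g, fA (f * g) = fA f * fA g
  fA_smulC : ∀ (c : ℂ) (f), fA (c • f) = c • fA f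
  fΩ_add : ∀ α β, fΩ (α + β) = fΩ α + fΩ β
  fΩ_smulA : ∀ (f : A) (α), fΩ (f • α) = fA f • fΩ α
  fT_add : ∀ X Y, fT (X + Y) = fT X + fT Y
  fT_smulA : ∀ (f : A) (X), fT (f • X) = fA f • fT X
  map_d : ∀ f, fΩ (E.d f) = E'.d (fA f)
  map_bracket : ∀ X Y, fT (E.bracket X Y) = E'.bracket (fT X) (fT Y)
  map_act : ∀ X f, fA (E.act X f) = E'.act (fT X) (fA f)
  map_lie : ∀ X α, fΩ (E.lie X α) = E'.lie (fT X) (fΩ α)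
  map_pair : ∀ α X, fA (E.pair α X) = E'.pair (fΩ α) (fT X)

/-- A pair `(φ, Δ) = ((fA, fΩ, fT), Δ)` is a morphism of vertex algebroids if `φ` is a
morphism of the underlying extended Lie algebroids, `Δ : T → Ω'` is ℂ-linear, and the
three compatibility equations (i), (ii), (iii) hold. -/
structure IsVertexAlgebroidHom
    (E : ExtLieAlgebroid A Ω T) (star : A → T → Ω) (br : T → T → A) (brΩ : T → T → Ω)
    (E' : ExtLieAlgebroid A' Ω' T') (star' : A' → T' → Ω') (br' : T' → T' → A')
    (brΩ' : T' → T' → Ω')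
    (fA : A → A') (fΩ : Ω → Ω') (fT : T → T') (Δ : T → Ω') : Prop where
  ext_hom : IsExtLieAlgebroidHom E E' fA fΩ fT
  Δ_add : ∀ X Y, Δ (X + Y) = Δ X + Δ Y
  Δ_smulC : ∀ (c : ℂ) (X), Δ (c • X) = c • Δ X
  eq_star : ∀ (f : A) (X : T),
    star' (fA f) (fT X) - fΩ (star f X) = Δ (f • X) - fA f • Δ X
  eq_br : ∀ X Y, br' (fT X) (fT Y) - fA (br X Y)
    = - E'.pair (Δ X) (fT Y) - E'.pair (Δ Y) (fT X)
  eq_brΩ : ∀ X Y, brΩ' (fT X) (fT Y) - fΩ (brΩ X Y)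
    = - E'.lie (fT X) (Δ Y) + E'.lie (fT Y) (Δ X)
      - E'.d (E'.pair (Δ X) (fT Y)) + Δ (E.bracket X Y)

/-!
For a candidate morphism `(φ, Δ)`, the difference of the two sides of each of the equations (i),
(ii), (iii) is a *defect*: `P(f, X)`, `Q(X, Y)` and `R(X, Y)` respectively. All the terms of the
vertex algebroid axioms that do not involve `∗`, `{ }`, `{ }_Ω` are preserved by `φ`, and the
corrections by `Δ` cancel, so the defects satisfy the homogeneous versions of axioms (1)–(5):

* `Q(X, Y) = Q(Y, X)` and `d Q(X, Y) = R(X, Y) + R(Y, X)`;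
* `P(f, gX) = P(fg, X) - f P(g, X)`;
* `Q(X, gY) = g Q(X, Y) - P(g, Y)(X)`;
* `R(X, gY) = g R(X, Y) - L_X P(g, Y) + P(Xg, Y) + P(g, [X, Y])`.

The rule for `R` rests on `L_{fX} α = f L_X α + α(X) df`, which holds because `Ω` is generated by
exact forms.

The rule for `P` propagates `P = 0` from `S` to its span. Once `P = 0`, both `Q` and `R` are
`A`-semilinear in the second argument; as `Q` is symmetric, and `R` is skew once `Q = 0`, their
vanishing propagates from `S × S` to `T × T`.
-/

section Span

variable {R M N : Type*} [Semiring R] [AddCommMonoid M] [Module R M] [AddZeroClass N] {S : Set M}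

theorem addMonoidHom_eq_zero_of_span_eq_top (hS : Submodule.span R S = ⊤) (F : M →+ N)
    (hF : ∀ x ∈ S, F x = 0) (hF_smul : ∀ (r : R) (x), F x = 0 → F (r • x) = 0) (x : M) :
    F x = 0 := by
  have hx : x ∈ Submodule.span R S := hS ▸ Submodule.mem_top
  induction hx using Submodule.span_induction with
  | mem x hx => exact hF x hx
  | zero => exact map_zero F
  | add x y _ _ hx hy => rw [map_add, hx, hy, add_zero]
  | smul r x _ hx => exact hF_smul r x hx

theorem addMonoidHom₂_eq_zero_of_span_eq_top (hS : Submodule.span R S = ⊤) (B : M → M →+ N)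
    (hB : ∀ x ∈ S, ∀ y ∈ S, B x y = 0) (hB_refl : ∀ x y, B x y = 0 → B y x = 0)
    (hB_smul : ∀ (x) (r : R) (y), B x y = 0 → B x (r • y) = 0) (x y : M) :
    B x y = 0 :=
  addMonoidHom_eq_zero_of_span_eq_top hS (B x)
    (fun y hy ↦ hB_refl y x <|
      addMonoidHom_eq_zero_of_span_eq_top hS (B y) (hB y hy) (hB_smul y) x)
    (hB_smul x) y

end Span

namespace ExtLieAlgebroid

variable (E : ExtLieAlgebroid A Ω T)

theorem pair_zero_left (X : T) : E.pair 0 X = 0 :=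
  map_zero (AddMonoidHom.mk' (E.pair · X) fun α β ↦ E.pair_add_left α β X)

theorem pair_sub_left (α β : Ω) (X : T) : E.pair (α - β) X = E.pair α X - E.pair β X :=
  map_sub (AddMonoidHom.mk' (E.pair · X) fun α β ↦ E.pair_add_left α β X) α β

theorem lie_zero_right (X : T) : E.lie X 0 = 0 :=
  map_zero (AddMonoidHom.mk' (E.lie X) (E.lie_add_right X))

theorem lie_sub_right (X : T) (α β : Ω) : E.lie X (α - β) = E.lie X α - E.lie X β :=
  map_sub (AddMonoidHom.mk' (E.lie X) (E.lie_add_right X)) α β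

theorem lie_smulA_left (f : A) (X : T) (α : Ω) :
    E.lie (f • X) α = f • E.lie X α + E.pair α X • E.d f := by
  induction E.d_span α using Submodule.span_induction with
  | mem α hα =>
    obtain ⟨g, rfl⟩ := hα
    rw [E.lie_d, E.lie_d, E.pair_d, E.act_smulA_left, E.d_mul]
  | zero => simp only [lie_zero_right, pair_zero_left, smul_zero, zero_smul, add_zero]
  | add α β _ _ hα hβ =>
    rw [E.lie_add_right, E.lie_add_right, E.pair_add_left, hα, hβ]
    module
  | smul g α _ hα =>
    rw [E.lie_smulA, E.lie_smulA, E.pair_smulA_left, E.act_smulA_left, hα]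
    module

end ExtLieAlgebroid

namespace IsExtLieAlgebroidHom

variable {E : ExtLieAlgebroid A Ω T} {star : A → T → Ω} {br : T → T → A} {brΩ : T → T → Ω}
  {E' : ExtLieAlgebroid A' Ω' T'} {star' : A' → T' → Ω'} {br' : T' → T' → A'}
  {brΩ' : T' → T' → Ω'} {fA : A → A'} {fΩ : Ω → Ω'} {fT : T → T'}

theorem fA_neg (hφ : IsExtLieAlgebroidHom E E' fA fΩ fT) (f : A) :
    fA (-f) = -fA f :=
  map_neg (AddMonoidHom.mk' fA hφ.fA_add) f

theorem fA_sub (hφ : IsExtLieAlgebroidHom E E' fA fΩ fT) (f g : A) :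
    fA (f - g) = fA f - fA g :=
  map_sub (AddMonoidHom.mk' fA hφ.fA_add) f g

theorem fΩ_neg (hφ : IsExtLieAlgebroidHom E E' fA fΩ fT) (α : Ω) :
    fΩ (-α) = -fΩ α :=
  map_neg (AddMonoidHom.mk' fΩ hφ.fΩ_add) α

theorem fΩ_sub (hφ : IsExtLieAlgebroidHom E E' fA fΩ fT) (α β : Ω) :
    fΩ (α - β) = fΩ α - fΩ β :=
  map_sub (AddMonoidHom.mk' fΩ hφ.fΩ_add) α β

variable (hφ : IsExtLieAlgebroidHom E E' fA fΩ fT)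
  (hV : IsVertexAlgebroid E star br brΩ) (hV' : IsVertexAlgebroid E' star' br' brΩ')
  (Δ : T →+ Ω')

/-- The defect `P(f, X)` of equation (i), bundled as an additive map in `X`: the equation holds at
`(f, X)` exactly when `P(f, X) = 0`. -/
def starDefect (f : A) : T →+ Ω' :=
  AddMonoidHom.mk'
    (fun X ↦ star' (fA f) (fT X) - fΩ (star f X) - (Δ (f • X) - fA f • Δ X))
    fun X Y ↦ by
      simp only [hφ.fT_add, hφ.fΩ_add, hV.star_add_right, hV'.star_add_right, smul_add, map_add]
      abel

/-- The defect `Q(X, Y)` of equation (ii), bundled as an additive map in `Y`: the equation holds at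
`(X, Y)` exactly when `Q(X, Y) = 0`. -/
def brDefect (X : T) : T →+ A' :=
  AddMonoidHom.mk'
    (fun Y ↦ br' (fT X) (fT Y) - fA (br X Y) - (-E'.pair (Δ X) (fT Y) - E'.pair (Δ Y) (fT X)))
    fun Y Z ↦ by
      simp only [hφ.fT_add, hφ.fA_add, hV.br_add_right, hV'.br_add_right, E'.pair_add_left,
        E'.pair_add_right, map_add]
      abel

/-- The defect `R(X, Y)` of equation (iii), bundled as an additive map in `Y`: the equation holds at
`(X, Y)` exactly when `R(X, Y) = 0`. -/
def brΩDefect (X : T) : T →+ Ω' :=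
  AddMonoidHom.mk'
    (fun Y ↦ brΩ' (fT X) (fT Y) - fΩ (brΩ X Y)
      - (-E'.lie (fT X) (Δ Y) + E'.lie (fT Y) (Δ X) - E'.d (E'.pair (Δ X) (fT Y))
        + Δ (E.bracket X Y)))
    fun Y Z ↦ by
      simp only [hφ.fT_add, hφ.fΩ_add, hV.brΩ_add_right, hV'.brΩ_add_right, E'.pair_add_right,
        E'.lie_add_left, E'.lie_add_right, E.bracket_add_right, map_add]
      abel

theorem starDefect_apply (f : A) (X : T) :
    hφ.starDefect hV hV' Δ f X
      = star' (fA f) (fT X) - fΩ (star f X) - (Δ (f • X) - fA f • Δ X) :=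
  rfl

theorem brDefect_apply (X Y : T) :
    hφ.brDefect hV hV' Δ X Y
      = br' (fT X) (fT Y) - fA (br X Y) - (-E'.pair (Δ X) (fT Y) - E'.pair (Δ Y) (fT X)) :=
  rfl

theorem brΩDefect_apply (X Y : T) :
    hφ.brΩDefect hV hV' Δ X Y
      = brΩ' (fT X) (fT Y) - fΩ (brΩ X Y)
        - (-E'.lie (fT X) (Δ Y) + E'.lie (fT Y) (Δ X) - E'.d (E'.pair (Δ X) (fT Y))
          + Δ (E.bracket X Y)) :=
  rfl

theorem brDefect_comm (X Y : T) : hφ.brDefect hV hV' Δ X Y = hφ.brDefect hV hV' Δ Y X := by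
  rw [brDefect_apply, brDefect_apply, hV.ax1 X Y, hV'.ax1 (fT X) (fT Y)]
  ring

theorem d_brDefect (X Y : T) :
    E'.d (hφ.brDefect hV hV' Δ X Y)
      = hφ.brΩDefect hV hV' Δ X Y + hφ.brΩDefect hV hV' Δ Y X := by
  have source := congrArg fΩ (hV.ax2 X Y)
  have target := hV'.ax2 (fT X) (fT Y)
  rw [hφ.map_d, hφ.fΩ_add] at source
  simp only [brDefect_apply, brΩDefect_apply, E.bracket_skew Y X, map_sub, map_neg]
  linear_combination (norm := module) target - source

theorem starDefect_smul (f g : A) (X : T) :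
    hφ.starDefect hV hV' Δ f (g • X)
      = hφ.starDefect hV hV' Δ (f * g) X - fA f • hφ.starDefect hV hV' Δ g X := by
  have source := congrArg fΩ (hV.ax3 f g X)
  have target := hV'.ax3 (fA f) (fA g) (fT X)
  simp only [hφ.fΩ_sub, hφ.fA_neg, hφ.fΩ_smulA, hφ.map_d, hφ.map_act] at source
  simp only [starDefect_apply, hφ.fT_smulA, hφ.fA_mul, mul_smul]
  linear_combination (norm := module) source - target

theorem brDefect_smul (g : A) (X Y : T) :
    hφ.brDefect hV hV' Δ X (g • Y)
      = fA g * hφ.brDefect hV hV' Δ X Y - E'.pair (hφ.starDefect hV hV' Δ g Y) (fT X) := by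
  have source := congrArg fA (hV.ax4 g X Y)
  have target := hV'.ax4 (fA g) (fT X) (fT Y)
  simp only [hφ.fA_sub, hφ.fA_neg, hφ.fA_mul, hφ.map_pair, hφ.map_act] at source
  simp only [brDefect_apply, starDefect_apply, hφ.fT_smulA, E'.pair_sub_left, E'.pair_smulA_left,
    E'.pair_smulA_right]
  linear_combination target - source

theorem brΩDefect_smul (g : A) (X Y : T) :
    hφ.brΩDefect hV hV' Δ X (g • Y)
      = fA g • hφ.brΩDefect hV hV' Δ X Y - E'.lie (fT X) (hφ.starDefect hV hV' Δ g Y)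
        + hφ.starDefect hV hV' Δ (E.act X g) Y + hφ.starDefect hV hV' Δ g (E.bracket X Y) := by
  have source := congrArg fΩ (hV.ax5 g X Y)
  have target := hV'.ax5 (fA g) (fT X) (fT Y)
  simp only [hφ.fΩ_sub, hφ.fΩ_neg, hφ.fΩ_add, hφ.fΩ_smulA, hφ.map_lie] at source
  simp only [brΩDefect_apply, starDefect_apply, hφ.fT_smulA, hφ.map_act, hφ.map_bracket,
    E'.pair_smulA_right, E'.lie_smulA_left, E'.lie_sub_right, E'.lie_smulA, E'.d_mul,
    E.bracket_smulA_right, map_add]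
  linear_combination (norm := module) target - source

variable {S : Set T}

theorem starDefect_eq_zero_of_span_eq_top (hS : Submodule.span A S = ⊤)
    (hP : ∀ f, ∀ X ∈ S, hφ.starDefect hV hV' Δ f X = 0) (f : A) (X : T) :
    hφ.starDefect hV hV' Δ f X = 0 := by
  -- The rule for `P(f, gX)` mixes `P(fg, X)` and `P(g, X)`, so all `f` are handled at once.
  refine congrFun (addMonoidHom_eq_zero_of_span_eq_top hS
    (AddMonoidHom.pi fun f ↦ hφ.starDefect hV hV' Δ f)
    (fun X hX ↦ funext fun f ↦ hP f X hX) (fun g X hX ↦ funext fun f ↦ ?_) X) f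
  have hX (f : A) : hφ.starDefect hV hV' Δ f X = 0 := congrFun hX f
  change hφ.starDefect hV hV' Δ f (g • X) = 0
  rw [starDefect_smul, hX, hX, smul_zero, sub_zero]

theorem brDefect_eq_zero_of_span_eq_top (hS : Submodule.span A S = ⊤)
    (hP : ∀ f X, hφ.starDefect hV hV' Δ f X = 0)
    (hQ : ∀ X ∈ S, ∀ Y ∈ S, hφ.brDefect hV hV' Δ X Y = 0) (X Y : T) :
    hφ.brDefect hV hV' Δ X Y = 0 := by
  refine addMonoidHom₂_eq_zero_of_span_eq_top hS (hφ.brDefect hV hV' Δ) hQ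
    (fun X Y hXY ↦ ?_) (fun X g Y hXY ↦ ?_) X Y
  · rw [brDefect_comm, hXY]
  · rw [brDefect_smul, hP, E'.pair_zero_left, hXY, mul_zero, sub_zero]

theorem brΩDefect_eq_zero_of_span_eq_top (hS : Submodule.span A S = ⊤)
    (hP : ∀ f X, hφ.starDefect hV hV' Δ f X = 0)
    (hQ : ∀ X Y, hφ.brDefect hV hV' Δ X Y = 0)
    (hR : ∀ X ∈ S, ∀ Y ∈ S, hφ.brΩDefect hV hV' Δ X Y = 0) (X Y : T) :
    hφ.brΩDefect hV hV' Δ X Y = 0 := by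
  refine addMonoidHom₂_eq_zero_of_span_eq_top hS (hφ.brΩDefect hV hV' Δ) hR
    (fun X Y hXY ↦ ?_) (fun X g Y hXY ↦ ?_) X Y
  · have skew := hφ.d_brDefect hV hV' Δ X Y
    rwa [hQ, map_zero, hXY, zero_add, eq_comm] at skew
  · simp only [brΩDefect_smul, hP, E'.lie_zero_right, hXY, smul_zero, sub_zero, add_zero]

end IsExtLieAlgebroidHom

theorem isVertexAlgebroidHom_of_generators_general
    (E : ExtLieAlgebroid A Ω T) (star : A → T → Ω) (br : T → T → A) (brΩ : T → T → Ω)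
    (hV : IsVertexAlgebroid E star br brΩ)
    (E' : ExtLieAlgebroid A' Ω' T') (star' : A' → T' → Ω') (br' : T' → T' → A')
    (brΩ' : T' → T' → Ω')
    (hV' : IsVertexAlgebroid E' star' br' brΩ')
    (fA : A → A') (fΩ : Ω → Ω') (fT : T → T')
    (hhom : IsExtLieAlgebroidHom E E' fA fΩ fT)
    (Δ : T → Ω')
    (hΔ_add : ∀ X Y, Δ (X + Y) = Δ X + Δ Y)
    (hΔ_smulC : ∀ (c : ℂ) (X), Δ (c • X) = c • Δ X)
    (S : Set T)
    (hS_span : Submodule.span A S = ⊤)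
    (h_star : ∀ (f : A), ∀ X ∈ S,
      star' (fA f) (fT X) - fΩ (star f X) = Δ (f • X) - fA f • Δ X)
    (h_br : ∀ X ∈ S, ∀ Y ∈ S,
      br' (fT X) (fT Y) - fA (br X Y)
        = -E'.pair (Δ X) (fT Y) - E'.pair (Δ Y) (fT X))
    (h_brΩ : ∀ X ∈ S, ∀ Y ∈ S,
      brΩ' (fT X) (fT Y) - fΩ (brΩ X Y)
        = -E'.lie (fT X) (Δ Y) + E'.lie (fT Y) (Δ X)
          - E'.d (E'.pair (Δ X) (fT Y)) + Δ (E.bracket X Y)) :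
    IsVertexAlgebroidHom E star br brΩ E' star' br' brΩ' fA fΩ fT Δ := by
  let Δ' : T →+ Ω' := AddMonoidHom.mk' Δ hΔ_add
  have hP : ∀ f X, hhom.starDefect hV hV' Δ' f X = 0 :=
    hhom.starDefect_eq_zero_of_span_eq_top hV hV' Δ' hS_span fun f X hX ↦
      sub_eq_zero.2 (h_star f X hX)
  have hQ : ∀ X Y, hhom.brDefect hV hV' Δ' X Y = 0 :=
    hhom.brDefect_eq_zero_of_span_eq_top hV hV' Δ' hS_span hP fun X hX Y hY ↦
      sub_eq_zero.2 (h_br X hX Y hY)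
  have hR : ∀ X Y, hhom.brΩDefect hV hV' Δ' X Y = 0 :=
    hhom.brΩDefect_eq_zero_of_span_eq_top hV hV' Δ' hS_span hP hQ fun X hX Y hY ↦
      sub_eq_zero.2 (h_brΩ X hX Y hY)
  exact
    { ext_hom := hhom
      Δ_add := hΔ_add
      Δ_smulC := hΔ_smulC
      eq_star := fun f X ↦ sub_eq_zero.1 (hP f X)
      eq_br := fun X Y ↦ sub_eq_zero.1 (hQ X Y)
      eq_brΩ := fun X Y ↦ sub_eq_zero.1 (hR X Y) }

/-!
STATEMENT 1: If the three morphism equations for a candidate morphism `(φ, Δ)` of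
vertex algebroids hold for all `f ∈ A` and `X, Y` in a subset `S ⊆ T` that is closed
under the Lie bracket and spans `T` as an `A`-module, then they hold for all
`(f, X, Y) ∈ A × T × T`, i.e. `(φ, Δ)` is a morphism of vertex algebroids.
-/

theorem isVertexAlgebroidHom_of_generators
    (E : ExtLieAlgebroid A Ω T) (star : A → T → Ω) (br : T → T → A) (brΩ : T → T → Ω)
    (hV : IsVertexAlgebroid E star br brΩ)
    (E' : ExtLieAlgebroid A' Ω' T') (star' : A' → T' → Ω') (br' : T' → T' → A')
    (brΩ' : T' → T' → Ω')
    (hV' : IsVertexAlgebroid E' star' br' brΩ')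
    (fA : A → A') (fΩ : Ω → Ω') (fT : T → T')
    (hhom : IsExtLieAlgebroidHom E E' fA fΩ fT)
    (Δ : T → Ω')
    (hΔ_add : ∀ X Y, Δ (X + Y) = Δ X + Δ Y)
    (hΔ_smulC : ∀ (c : ℂ) (X), Δ (c • X) = c • Δ X)
    (S : Set T)
    (hS_bracket : ∀ X ∈ S, ∀ Y ∈ S, E.bracket X Y ∈ S)
    (hS_span : Submodule.span A S = ⊤)
    (h_star : ∀ (f : A), ∀ X ∈ S,
      star' (fA f) (fT X) - fΩ (star f X) = Δ (f • X) - fA f • Δ X)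
    (h_br : ∀ X ∈ S, ∀ Y ∈ S,
      br' (fT X) (fT Y) - fA (br X Y)
        = - E'.pair (Δ X) (fT Y) - E'.pair (Δ Y) (fT X))
    (h_brΩ : ∀ X ∈ S, ∀ Y ∈ S,
      brΩ' (fT X) (fT Y) - fΩ (brΩ X Y)
        = - E'.lie (fT X) (Δ Y) + E'.lie (fT Y) (Δ X)
          - E'.d (E'.pair (Δ X) (fT Y)) + Δ (E.bracket X Y)) :
    (∀ (f : A) (X : T),
      star' (fA f) (fT X) - fΩ (star f X) = Δ (f • X) - fA f • Δ X) ∧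
    (∀ X Y : T,
      br' (fT X) (fT Y) - fA (br X Y)
        = - E'.pair (Δ X) (fT Y) - E'.pair (Δ Y) (fT X)) ∧
    (∀ X Y : T,
      brΩ' (fT X) (fT Y) - fΩ (brΩ X Y)
        = - E'.lie (fT X) (Δ Y) + E'.lie (fT Y) (Δ X)
          - E'.d (E'.pair (Δ X) (fT Y)) + Δ (E.bracket X Y)) ∧
    IsVertexAlgebroidHom E star br brΩ E' star' br' brΩ' fA fΩ fT Δ := by
  have h := isVertexAlgebroidHom_of_generators_general E star br brΩ hV E' star' br' brΩ' hV'
    fA fΩ fT hhom Δ hΔ_add hΔ_smulC S hS_span h_star h_br h_brΩ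
  exact ⟨h.eq_star, h.eq_br, h.eq_brΩ, h⟩
end

section
/- Let W, W', W'' ⊆ ℝ^p be open and let φ: W → W' and φ': W' → W'' be smooth diffeomorphisms. Define the ℂ-valued 2-form σ_{φ',φ} := tr(θ_φ ∧ (g_φ⁻¹·(φ*θ_{φ'})·g_φ)) on W. Then the Wess–Zumino 3-forms of the Jacobians satisfy WZ_{φ'∘φ} = WZ_φ + φ*(WZ_{φ'}) + d(σ_{φ',φ}). -/
/-!
STATEMENT 9: For smooth diffeomorphisms φ : W → W' and φ' : W' → W'' between open
subsets of ℝ^p, the Wess–Zumino 3-forms of the Jacobians satisfy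
WZ_{φ'∘φ} = WZ_φ + φ*(WZ_{φ'}) + d(σ_{φ',φ}), where
σ_{φ',φ} = tr(θ_φ ∧ (g_φ⁻¹·(φ*θ_{φ'})·g_φ)).
-/

attribute [local instance] Matrix.normedAddCommGroup Matrix.normedSpace

/-- The complexified Jacobian matrix of a map ψ : ℝ^p → ℝ^p. -/
noncomputable def jacobian {p : ℕ} (ψ : (Fin p → ℝ) → (Fin p → ℝ))
    (x : Fin p → ℝ) : Matrix (Fin p) (Fin p) ℂ :=
  Matrix.of fun i j => ((fderiv ℝ ψ x (Pi.single j 1) i : ℝ) : ℂ)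

/-- The Maurer–Cartan form `θ_ψ(x)(v) = (g_ψ x)⁻¹ · (D_v g_ψ)(x)` of the Jacobian. -/
noncomputable def mcJac {p : ℕ} (ψ : (Fin p → ℝ) → (Fin p → ℝ))
    (x v : Fin p → ℝ) : Matrix (Fin p) (Fin p) ℂ :=
  (jacobian ψ x)⁻¹ * fderiv ℝ (jacobian ψ) x v

/-- The Wess–Zumino 3-form `WZ_ψ = (1/3)·tr(θ_ψ ∧ θ_ψ ∧ θ_ψ)`. -/
noncomputable def wzJac {p : ℕ} (ψ : (Fin p → ℝ) → (Fin p → ℝ))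
    (x : Fin p → ℝ) (w : Fin 3 → (Fin p → ℝ)) : ℂ :=
  (1 / 3 : ℂ) * ∑ σ : Equiv.Perm (Fin 3),
    ((Equiv.Perm.sign σ : ℤ) : ℂ) *
      (mcJac ψ x (w (σ 0)) * mcJac ψ x (w (σ 1)) * mcJac ψ x (w (σ 2))).trace

/-- The 2-form `σ_{φ',φ} = tr(θ_φ ∧ (g_φ⁻¹·(φ*θ_{φ'})·g_φ))`. -/
noncomputable def sigmaForm {p : ℕ} (φ' φ : (Fin p → ℝ) → (Fin p → ℝ))
    (x : Fin p → ℝ) (u v : Fin p → ℝ) : ℂ :=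
  (mcJac φ x u *
      ((jacobian φ x)⁻¹ * mcJac φ' (φ x) (fderiv ℝ φ x v) * jacobian φ x)).trace
    - (mcJac φ x v *
      ((jacobian φ x)⁻¹ * mcJac φ' (φ x) (fderiv ℝ φ x u) * jacobian φ x)).trace

/-!
The theorem is the Polyakov–Wiegmann identity for the two factors of
`jacobian (φ' ∘ φ) = (jacobian φ' ∘ φ) * jacobian φ`. For functions `h`, `g` valued in the units of
a normed algebra, put `ρ = dg·g⁻¹` and `θ = h⁻¹·dh`. Then `(hg)⁻¹·d(hg) = g⁻¹·(ρ + θ)·g`, so for any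
trace `τ` the cube of this form has trace
`τ(ρ∧ρ∧ρ) + τ(θ∧θ∧θ) + 3·(τ(ρ∧ρ∧θ) + τ(ρ∧θ∧θ))`. The first term is also the cube of `g⁻¹·dg`, and by
the Maurer–Cartan equations `dρ = ρ∧ρ`, `dθ = -θ∧θ` the mixed terms add up to `3·d τ(ρ∧θ)`, where
`τ(ρ∧θ)` is `σ` after conjugation by `g`.
-/

open scoped Ring Topology

section AlternatingSum

variable {E F : Type*} [AddCommGroup F]

/-- The signed sum of `f` over all permutations of its three arguments: the value on `w` of the
3-form `α ∧ β ∧ γ` when `f a b c = α a * β b * γ c` for 1-forms `α`, `β`, `γ`. -/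
def alternatingSum (f : E → E → E → F) (w : Fin 3 → E) : F :=
  ∑ σ : Equiv.Perm (Fin 3), Equiv.Perm.sign σ • f (w (σ 0)) (w (σ 1)) (w (σ 2))

theorem alternatingSum_eq_sum_antisymm_left (f : E → E → E → F) (w : Fin 3 → E) :
    alternatingSum f w =
      (f (w 0) (w 1) (w 2) - f (w 1) (w 0) (w 2)) + (f (w 1) (w 2) (w 0) - f (w 2) (w 1) (w 0)) +
        (f (w 2) (w 0) (w 1) - f (w 0) (w 2) (w 1)) := by
  have univ_eq : (Finset.univ : Finset (Equiv.Perm (Fin 3))) =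
      {1, .swap 0 1, .swap 1 2, .swap 0 2, .swap 0 1 * .swap 1 2, .swap 1 2 * .swap 0 1} := by
    decide
  have swap_01_2 : Equiv.swap (0 : Fin 3) 1 2 = 2 := by decide
  have swap_12_0 : Equiv.swap (1 : Fin 3) 2 0 = 0 := by decide
  have swap_02_1 : Equiv.swap (0 : Fin 3) 2 1 = 1 := by decide
  rw [alternatingSum, univ_eq]
  repeat rw [Finset.sum_insert (by decide)]
  simp only [Finset.sum_singleton, Equiv.Perm.sign_one, Equiv.Perm.sign_swap', Equiv.Perm.sign_mul,
    Equiv.Perm.coe_one, Equiv.Perm.coe_mul, Function.comp_apply, id_eq, Equiv.swap_apply_left,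
    Equiv.swap_apply_right, swap_01_2, swap_12_0, swap_02_1, Fin.reduceEq, ↓reduceIte, mul_neg,
    mul_one, neg_neg, one_smul, Units.neg_smul]
  abel

theorem alternatingSum_eq_sum_antisymm_right (f : E → E → E → F) (w : Fin 3 → E) :
    alternatingSum f w =
      (f (w 0) (w 1) (w 2) - f (w 0) (w 2) (w 1)) + (f (w 1) (w 2) (w 0) - f (w 1) (w 0) (w 2)) +
        (f (w 2) (w 0) (w 1) - f (w 2) (w 1) (w 0)) := by
  rw [alternatingSum_eq_sum_antisymm_left]
  abel

theorem alternatingSum_congr_antisymm_left {f f' : E → E → E → F}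
    (h : ∀ a b c, f a b c - f b a c = f' a b c - f' b a c) (w : Fin 3 → E) :
    alternatingSum f w = alternatingSum f' w := by
  simp only [alternatingSum_eq_sum_antisymm_left, h]

theorem alternatingSum_congr_antisymm_right {f f' : E → E → E → F}
    (h : ∀ a b c, f a b c - f a c b = f' a b c - f' a c b) (w : Fin 3 → E) :
    alternatingSum f w = alternatingSum f' w := by
  simp only [alternatingSum_eq_sum_antisymm_right, h]

theorem alternatingSum_rotate (f : E → E → E → F) (w : Fin 3 → E) :
    alternatingSum (fun a b c => f b c a) w = alternatingSum f w := by
  rw [alternatingSum_eq_sum_antisymm_left, alternatingSum_eq_sum_antisymm_right]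
  abel

theorem alternatingSum_add (f f' : E → E → E → F) (w : Fin 3 → E) :
    alternatingSum (fun a b c => f a b c + f' a b c) w =
      alternatingSum f w + alternatingSum f' w := by
  simp only [alternatingSum, smul_add, Finset.sum_add_distrib]

theorem alternatingSum_neg (f : E → E → E → F) (w : Fin 3 → E) :
    alternatingSum (fun a b c => -f a b c) w = -alternatingSum f w := by
  simp only [alternatingSum, smul_neg, Finset.sum_neg_distrib]

end AlternatingSum

section TraceWedge

variable {E A F T : Type*} [Ring A] [AddCommGroup F] [FunLike T A F]

/-- The 2-form `τ(α ∧ β)` of two algebra-valued 1-forms at a point, for a trace `τ`. -/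
def traceWedge (τ : T) (α β : E → A) (u v : E) : F :=
  τ (α u * β v) - τ (α v * β u)

/-- The 3-form `τ(α ∧ β ∧ γ)` of three algebra-valued 1-forms at a point, for a trace `τ`. -/
def traceWedge₃ (τ : T) (α β γ : E → A) (w : Fin 3 → E) : F :=
  alternatingSum (fun a b c => τ (α a * β b * γ c)) w

theorem traceWedge₃_rotate {τ : T} (hτ : ∀ a b, τ (a * b) = τ (b * a)) (α β γ : E → A)
    (w : Fin 3 → E) : traceWedge₃ τ α β γ w = traceWedge₃ τ β γ α w := by
  rw [traceWedge₃, traceWedge₃, ← alternatingSum_rotate fun a b c => τ (β a * γ b * α c)]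
  simp only [mul_assoc, hτ (α _)]

theorem traceWedge_conj {τ : T} (hτ : ∀ a b, τ (a * b) = τ (b * a)) {g : A} (hg : IsUnit g)
    (α β : E → A) :
    traceWedge τ (fun v => g⁻¹ʳ * α v * g) (fun v => g⁻¹ʳ * β v * g) = traceWedge τ α β := by
  funext u v
  simp only [traceWedge, hτ g⁻¹ʳ, mul_assoc, Ring.mul_inverse_cancel_left _ _ hg,
    Ring.mul_inverse_cancel _ hg, mul_one]

theorem traceWedge₃_conj {τ : T} (hτ : ∀ a b, τ (a * b) = τ (b * a)) {g : A} (hg : IsUnit g)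
    (α β γ : E → A) (w : Fin 3 → E) :
    traceWedge₃ τ (fun v => g⁻¹ʳ * α v * g) (fun v => g⁻¹ʳ * β v * g) (fun v => g⁻¹ʳ * γ v * g) w =
      traceWedge₃ τ α β γ w := by
  simp only [traceWedge₃, hτ g⁻¹ʳ, mul_assoc, Ring.mul_inverse_cancel_left _ _ hg,
    Ring.mul_inverse_cancel _ hg, mul_one]

variable [AddMonoidHomClass T A F]

theorem traceWedge₃_add_cube {τ : T} (hτ : ∀ a b, τ (a * b) = τ (b * a)) (α β : E → A)
    (w : Fin 3 → E) :
    traceWedge₃ τ (α + β) (α + β) (α + β) w =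
      traceWedge₃ τ α α α w + traceWedge₃ τ β β β w +
        3 • (traceWedge₃ τ α α β w + traceWedge₃ τ α β β w) := by
  have expand : traceWedge₃ τ (α + β) (α + β) (α + β) w =
      traceWedge₃ τ α α α w + traceWedge₃ τ α α β w + traceWedge₃ τ α β α w +
        traceWedge₃ τ α β β w + traceWedge₃ τ β α α w + traceWedge₃ τ β α β w +
        traceWedge₃ τ β β α w + traceWedge₃ τ β β β w := by
    simp only [traceWedge₃, ← alternatingSum_add, Pi.add_apply, add_mul, mul_add, map_add]
    congr! 4
    abel
  rw [expand, traceWedge₃_rotate hτ α β α, traceWedge₃_rotate hτ β α α,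
    traceWedge₃_rotate hτ β β α, traceWedge₃_rotate hτ β α β]
  abel

end TraceWedge

section Calculus

variable {𝕜 E A F : Type*} [NontriviallyNormedField 𝕜]
  [NormedAddCommGroup E] [NormedSpace 𝕜 E] [NormedRing A] [NormedAlgebra 𝕜 A]
  [NormedAddCommGroup F] [NormedSpace 𝕜 F]

variable (𝕜) in
/-- The exterior derivative of a 2-form `ω`, written as a function `ω y u v` of the base point and
two vectors instead of as a map into Mathlib's alternating maps. -/
noncomputable def extDerivTwoForm (ω : E → E → E → F) (x : E) (w : Fin 3 → E) : F :=
  ∑ i : Fin 3, (-1 : ℤ) ^ (i : ℕ) •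
    fderiv 𝕜 (fun y => ω y (w (i.succAbove 0)) (w (i.succAbove 1))) x (w i)

theorem extDerivTwoForm_eq_sub_add (ω : E → E → E → F) (x : E) (w : Fin 3 → E) :
    extDerivTwoForm 𝕜 ω x w =
      fderiv 𝕜 (fun y => ω y (w 1) (w 2)) x (w 0) - fderiv 𝕜 (fun y => ω y (w 0) (w 2)) x (w 1) +
        fderiv 𝕜 (fun y => ω y (w 0) (w 1)) x (w 2) := by
  have succAbove_zero_one : (0 : Fin 3).succAbove 1 = 2 := rfl
  have succAbove_one_one : (1 : Fin 3).succAbove 1 = 2 := rfl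
  have succAbove_two_zero : (2 : Fin 3).succAbove 0 = 0 := rfl
  have succAbove_two_one : (2 : Fin 3).succAbove 1 = 1 := rfl
  simp [extDerivTwoForm, Fin.sum_univ_three, sub_eq_add_neg, succAbove_zero_one,
    succAbove_one_one, succAbove_two_zero, succAbove_two_one]

theorem extDerivTwoForm_congr {ω ω' : E → E → E → F} {x : E}
    (h : ω =ᶠ[𝓝 x] ω') (w : Fin 3 → E) : extDerivTwoForm 𝕜 ω x w = extDerivTwoForm 𝕜 ω' x w := by
  have fderiv_eq (u v : E) : fderiv 𝕜 (fun y => ω y u v) x = fderiv 𝕜 (fun y => ω' y u v) x :=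
    Filter.EventuallyEq.fderiv_eq (h.mono fun y hy => congrFun₂ hy u v)
  simp only [extDerivTwoForm, fderiv_eq]

theorem extDerivTwoForm_traceWedge (τ : A →L[𝕜] F) {α β : E → E →L[𝕜] A} {x : E}
    (hα : DifferentiableAt 𝕜 α x) (hβ : DifferentiableAt 𝕜 β x) (w : Fin 3 → E) :
    extDerivTwoForm 𝕜 (fun y => traceWedge τ (α y) (β y)) x w =
      alternatingSum (fun a b c => τ (fderiv 𝕜 α x a b * β x c)) w -
        alternatingSum (fun a b c => τ (α x a * fderiv 𝕜 β x b c)) w := by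
  have hasFDerivAt_mul (u v : E) :=
    τ.hasFDerivAt.comp x ((hα.hasFDerivAt.clm_apply (hasFDerivAt_const u x)).mul'
      (hβ.hasFDerivAt.clm_apply (hasFDerivAt_const v x)))
  have fderiv_apply (u v z : E) : fderiv 𝕜 (fun y => traceWedge τ (α y) (β y) u v) x z =
      τ (α x u * fderiv 𝕜 β x z v) + τ (fderiv 𝕜 α x z u * β x v) -
        (τ (α x v * fderiv 𝕜 β x z u) + τ (fderiv 𝕜 α x z v * β x u)) := by
    have fderiv_eq : fderiv 𝕜 (fun y => traceWedge τ (α y) (β y) u v) x = _ :=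
      ((hasFDerivAt_mul u v).sub (hasFDerivAt_mul v u)).fderiv
    simp [fderiv_eq]
  simp only [extDerivTwoForm_eq_sub_add, fderiv_apply, alternatingSum_eq_sum_antisymm_left]
  abel

theorem differentiableAt_fderiv {f : E → F} {x : E} (hf : ContDiffAt 𝕜 2 f x) :
    DifferentiableAt 𝕜 (fderiv 𝕜 f) x :=
  (hf.fderiv_right (m := 1) (by norm_num)).differentiableAt one_ne_zero

section MaurerCartan

variable (𝕜) in
/-- The left Maurer–Cartan form `g⁻¹·dg` of an algebra-valued function `g`. -/
noncomputable def leftMaurerCartan (g : E → A) (x : E) : E →L[𝕜] A :=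
  (ContinuousLinearMap.mul 𝕜 A (g x)⁻¹ʳ).comp (fderiv 𝕜 g x)

variable (𝕜) in
/-- The right Maurer–Cartan form `dg·g⁻¹` of an algebra-valued function `g`. -/
noncomputable def rightMaurerCartan (g : E → A) (x : E) : E →L[𝕜] A :=
  ((ContinuousLinearMap.mul 𝕜 A).flip (g x)⁻¹ʳ).comp (fderiv 𝕜 g x)

@[simp]
theorem leftMaurerCartan_apply (g : E → A) (x v : E) :
    leftMaurerCartan 𝕜 g x v = (g x)⁻¹ʳ * fderiv 𝕜 g x v :=
  rfl

@[simp]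
theorem rightMaurerCartan_apply (g : E → A) (x v : E) :
    rightMaurerCartan 𝕜 g x v = fderiv 𝕜 g x v * (g x)⁻¹ʳ :=
  rfl

theorem leftMaurerCartan_congr {g g' : E → A} {x : E} (h : g =ᶠ[𝓝 x] g') :
    leftMaurerCartan 𝕜 g x = leftMaurerCartan 𝕜 g' x := by
  rw [leftMaurerCartan, leftMaurerCartan, h.fderiv_eq, h.eq_of_nhds]

theorem leftMaurerCartan_eq_conj {g : E → A} {x : E} (hx : IsUnit (g x)) :
    ⇑(leftMaurerCartan 𝕜 g x) = fun v => (g x)⁻¹ʳ * rightMaurerCartan 𝕜 g x v * g x := by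
  funext v
  simp [mul_assoc, Ring.inverse_mul_cancel _ hx]

theorem leftMaurerCartan_mul {h g : E → A} {x : E} (hh : DifferentiableAt 𝕜 h x)
    (hg : DifferentiableAt 𝕜 g x) (hhx : IsUnit (h x)) (hgx : IsUnit (g x)) :
    ⇑(leftMaurerCartan 𝕜 (h * g) x) = fun v =>
      (g x)⁻¹ʳ * (⇑(rightMaurerCartan 𝕜 g x) + ⇑(leftMaurerCartan 𝕜 h x)) v * g x := by
  funext v
  simp [fderiv_mul' hh hg, Ring.inverse_mul (.inl hhx), mul_add, add_mul, mul_assoc,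
    Ring.inverse_mul_cancel _ hgx, Ring.inverse_mul_cancel_left _ _ hhx]

variable [HasSummableGeomSeries A]

theorem fderiv_ringInverse_comp_apply {g : E → A} {x : E} (hg : DifferentiableAt 𝕜 g x)
    (hx : IsUnit (g x)) (v : E) :
    fderiv 𝕜 (fun y => (g y)⁻¹ʳ) x v = -((g x)⁻¹ʳ * fderiv 𝕜 g x v * (g x)⁻¹ʳ) := by
  have fderiv_comp := fderiv_fun_comp x (differentiableAt_inverse hx) hg
  lift g x to Aˣ using hx with a
  simp [fderiv_comp, fderiv_inverse]

theorem differentiableAt_leftMaurerCartan {g : E → A} {x : E} (hg : ContDiffAt 𝕜 2 g x)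
    (hx : IsUnit (g x)) : DifferentiableAt 𝕜 (leftMaurerCartan 𝕜 g) x :=
  ((ContinuousLinearMap.mul 𝕜 A).differentiableAt.comp x
    ((hg.differentiableAt two_ne_zero).inverse hx)).clm_comp (differentiableAt_fderiv hg)

theorem differentiableAt_rightMaurerCartan {g : E → A} {x : E} (hg : ContDiffAt 𝕜 2 g x)
    (hx : IsUnit (g x)) : DifferentiableAt 𝕜 (rightMaurerCartan 𝕜 g) x :=
  ((ContinuousLinearMap.mul 𝕜 A).flip.differentiableAt.comp x
    ((hg.differentiableAt two_ne_zero).inverse hx)).clm_comp (differentiableAt_fderiv hg)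

theorem fderiv_leftMaurerCartan_apply {g : E → A} {x : E} (hg : ContDiffAt 𝕜 2 g x)
    (hx : IsUnit (g x)) (u v : E) :
    fderiv 𝕜 (leftMaurerCartan 𝕜 g) x u v = (g x)⁻¹ʳ * fderiv 𝕜 (fderiv 𝕜 g) x u v -
      leftMaurerCartan 𝕜 g x u * leftMaurerCartan 𝕜 g x v := by
  have hg₁ := hg.differentiableAt two_ne_zero
  have hg₂ := differentiableAt_fderiv hg
  have product_rule : fderiv 𝕜 (fun y => (g y)⁻¹ʳ * fderiv 𝕜 g y v) x u =
      (g x)⁻¹ʳ * fderiv 𝕜 (fderiv 𝕜 g) x u v +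
        fderiv 𝕜 (fun y => (g y)⁻¹ʳ) x u * fderiv 𝕜 g x v := by
    rw [fderiv_fun_mul' (hg₁.inverse hx) (hg₂.clm_apply (differentiableAt_const v)),
      fderiv_clm_apply hg₂ (differentiableAt_const v)]
    simp
  calc fderiv 𝕜 (leftMaurerCartan 𝕜 g) x u v
      = fderiv 𝕜 (fun y => leftMaurerCartan 𝕜 g y v) x u := by
        rw [fderiv_clm_apply (differentiableAt_leftMaurerCartan hg hx) (differentiableAt_const v)]
        simp
    _ = (g x)⁻¹ʳ * fderiv 𝕜 (fderiv 𝕜 g) x u v +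
          fderiv 𝕜 (fun y => (g y)⁻¹ʳ) x u * fderiv 𝕜 g x v := product_rule
    _ = (g x)⁻¹ʳ * fderiv 𝕜 (fderiv 𝕜 g) x u v -
          leftMaurerCartan 𝕜 g x u * leftMaurerCartan 𝕜 g x v := by
        simp [fderiv_ringInverse_comp_apply hg₁ hx, mul_assoc, sub_eq_add_neg]

theorem fderiv_rightMaurerCartan_apply {g : E → A} {x : E} (hg : ContDiffAt 𝕜 2 g x)
    (hx : IsUnit (g x)) (u v : E) :
    fderiv 𝕜 (rightMaurerCartan 𝕜 g) x u v = fderiv 𝕜 (fderiv 𝕜 g) x u v * (g x)⁻¹ʳ -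
      rightMaurerCartan 𝕜 g x v * rightMaurerCartan 𝕜 g x u := by
  have hg₁ := hg.differentiableAt two_ne_zero
  have hg₂ := differentiableAt_fderiv hg
  have product_rule : fderiv 𝕜 (fun y => fderiv 𝕜 g y v * (g y)⁻¹ʳ) x u =
      fderiv 𝕜 g x v * fderiv 𝕜 (fun y => (g y)⁻¹ʳ) x u +
        fderiv 𝕜 (fderiv 𝕜 g) x u v * (g x)⁻¹ʳ := by
    rw [fderiv_fun_mul' (hg₂.clm_apply (differentiableAt_const v)) (hg₁.inverse hx),
      fderiv_clm_apply hg₂ (differentiableAt_const v)]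
    simp
  calc fderiv 𝕜 (rightMaurerCartan 𝕜 g) x u v
      = fderiv 𝕜 (fun y => rightMaurerCartan 𝕜 g y v) x u := by
        rw [fderiv_clm_apply (differentiableAt_rightMaurerCartan hg hx) (differentiableAt_const v)]
        simp
    _ = fderiv 𝕜 g x v * fderiv 𝕜 (fun y => (g y)⁻¹ʳ) x u +
          fderiv 𝕜 (fderiv 𝕜 g) x u v * (g x)⁻¹ʳ := product_rule
    _ = fderiv 𝕜 (fderiv 𝕜 g) x u v * (g x)⁻¹ʳ -
          rightMaurerCartan 𝕜 g x v * rightMaurerCartan 𝕜 g x u := by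
        simp [fderiv_ringInverse_comp_apply hg₁ hx, mul_assoc, sub_eq_neg_add]

theorem fderiv_leftMaurerCartan_antisymm {g : E → A} {x : E}
    (hg : ContDiffAt 𝕜 (minSmoothness 𝕜 2) g x) (hx : IsUnit (g x)) (u v : E) :
    fderiv 𝕜 (leftMaurerCartan 𝕜 g) x u v - fderiv 𝕜 (leftMaurerCartan 𝕜 g) x v u =
      -(leftMaurerCartan 𝕜 g x u * leftMaurerCartan 𝕜 g x v -
        leftMaurerCartan 𝕜 g x v * leftMaurerCartan 𝕜 g x u) := by
  have hg₂ := hg.of_le le_minSmoothness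
  rw [fderiv_leftMaurerCartan_apply hg₂ hx, fderiv_leftMaurerCartan_apply hg₂ hx,
    hg.isSymmSndFDerivAt le_rfl u v]
  abel

theorem fderiv_rightMaurerCartan_antisymm {g : E → A} {x : E}
    (hg : ContDiffAt 𝕜 (minSmoothness 𝕜 2) g x) (hx : IsUnit (g x)) (u v : E) :
    fderiv 𝕜 (rightMaurerCartan 𝕜 g) x u v - fderiv 𝕜 (rightMaurerCartan 𝕜 g) x v u =
      rightMaurerCartan 𝕜 g x u * rightMaurerCartan 𝕜 g x v -
        rightMaurerCartan 𝕜 g x v * rightMaurerCartan 𝕜 g x u := by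
  have hg₂ := hg.of_le le_minSmoothness
  rw [fderiv_rightMaurerCartan_apply hg₂ hx, fderiv_rightMaurerCartan_apply hg₂ hx,
    hg.isSymmSndFDerivAt le_rfl u v]
  abel

theorem extDerivTwoForm_traceWedge_maurerCartan (τ : A →L[𝕜] F) {g h : E → A} {x : E}
    (hg : ContDiffAt 𝕜 (minSmoothness 𝕜 2) g x) (hh : ContDiffAt 𝕜 (minSmoothness 𝕜 2) h x)
    (hgx : IsUnit (g x)) (hhx : IsUnit (h x)) (w : Fin 3 → E) :
    extDerivTwoForm 𝕜 (fun y => traceWedge τ (rightMaurerCartan 𝕜 g y) (leftMaurerCartan 𝕜 h y))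
        x w =
      traceWedge₃ τ (rightMaurerCartan 𝕜 g x) (rightMaurerCartan 𝕜 g x)
          (leftMaurerCartan 𝕜 h x) w +
        traceWedge₃ τ (rightMaurerCartan 𝕜 g x) (leftMaurerCartan 𝕜 h x)
          (leftMaurerCartan 𝕜 h x) w := by
  set ρ := rightMaurerCartan 𝕜 g
  set θ := leftMaurerCartan 𝕜 h
  have left_term : alternatingSum (fun a b c => τ (fderiv 𝕜 ρ x a b * θ x c)) w =
      traceWedge₃ τ (ρ x) (ρ x) (θ x) w := by
    refine alternatingSum_congr_antisymm_left (fun a b c => ?_) w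
    rw [← map_sub, ← map_sub, ← sub_mul, ← sub_mul, fderiv_rightMaurerCartan_antisymm hg hgx]
  have right_term : alternatingSum (fun a b c => τ (ρ x a * fderiv 𝕜 θ x b c)) w =
      -traceWedge₃ τ (ρ x) (θ x) (θ x) w := by
    rw [traceWedge₃, ← alternatingSum_neg]
    refine alternatingSum_congr_antisymm_right (fun a b c => ?_) w
    rw [← map_sub, ← mul_sub, fderiv_leftMaurerCartan_antisymm hh hhx]
    simp only [mul_neg, mul_sub, map_neg, map_sub, mul_assoc]
    abel
  rw [extDerivTwoForm_traceWedge τ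
    (differentiableAt_rightMaurerCartan (hg.of_le le_minSmoothness) hgx)
    (differentiableAt_leftMaurerCartan (hh.of_le le_minSmoothness) hhx),
    left_term, right_term, sub_neg_eq_add]

theorem traceWedge₃_leftMaurerCartan_mul {τ : A →L[𝕜] F} (hτ : ∀ a b, τ (a * b) = τ (b * a))
    {h g : E → A} {x : E} (hh : ContDiffAt 𝕜 (minSmoothness 𝕜 2) h x)
    (hg : ContDiffAt 𝕜 (minSmoothness 𝕜 2) g x) (hhx : IsUnit (h x)) (hgx : IsUnit (g x))
    (w : Fin 3 → E) :
    traceWedge₃ τ (leftMaurerCartan 𝕜 (h * g) x) (leftMaurerCartan 𝕜 (h * g) x)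
        (leftMaurerCartan 𝕜 (h * g) x) w =
      traceWedge₃ τ (leftMaurerCartan 𝕜 g x) (leftMaurerCartan 𝕜 g x) (leftMaurerCartan 𝕜 g x) w +
        traceWedge₃ τ (leftMaurerCartan 𝕜 h x) (leftMaurerCartan 𝕜 h x)
          (leftMaurerCartan 𝕜 h x) w +
        3 • extDerivTwoForm 𝕜
          (fun y => traceWedge τ (rightMaurerCartan 𝕜 g y) (leftMaurerCartan 𝕜 h y)) x w := by
  have hh₁ := (hh.of_le le_minSmoothness).differentiableAt two_ne_zero
  have hg₁ := (hg.of_le le_minSmoothness).differentiableAt two_ne_zero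
  rw [leftMaurerCartan_mul hh₁ hg₁ hhx hgx, traceWedge₃_conj hτ hgx, traceWedge₃_add_cube hτ,
    leftMaurerCartan_eq_conj hgx, traceWedge₃_conj hτ hgx,
    extDerivTwoForm_traceWedge_maurerCartan τ hg hh hgx hhx]

end MaurerCartan

end Calculus

section ComplexMatrix

variable {ι : Type*} [Fintype ι]

/-- The matrix trace as a continuous real-linear map, the `τ` of the trace forms of Jacobians. -/
noncomputable def complexTrace : Matrix ι ι ℂ →L[ℝ] ℂ :=
  LinearMap.toContinuousLinearMap (Matrix.traceLinearMap ι ℝ ℂ)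

theorem complexTrace_mul_comm (M N : Matrix ι ι ℂ) : complexTrace (M * N) = complexTrace (N * M) :=
  Matrix.trace_mul_comm M N

variable [DecidableEq ι]

/-- The complexified matrix of an endomorphism of `ℝ^ι`, as an algebra homomorphism, so that the
Jacobian inherits the chain rule from the Fréchet derivative. -/
noncomputable def complexMatrix : ((ι → ℝ) →L[ℝ] (ι → ℝ)) →ₐ[ℝ] Matrix ι ι ℂ :=
  Complex.ofRealAm.mapMatrix.comp <| LinearMap.toMatrixAlgEquiv'.toAlgHom.comp
    { ContinuousLinearMap.toLinearMapRingHom with commutes' := fun _ => rfl }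

end ComplexMatrix

section Jacobian

-- Differentiating inverses requires a submultiplicative norm, which the entrywise sup norm is not.
-- Both norms induce the product topology, on which alone `fderiv` depends.
attribute [local instance] Matrix.linftyOpNormedAddCommGroup Matrix.linftyOpNormedSpace
  Matrix.linftyOpNormedRing Matrix.linftyOpNormedAlgebra

theorem hasSummableGeomSeries_complexMatrix {ι : Type*} [Fintype ι] [DecidableEq ι] :
    HasSummableGeomSeries (Matrix ι ι ℂ) :=
  @instHasSummableGeomSeriesOfCompleteSpace _ _ (Matrix.instCompleteSpace ι ι ℂ)

variable {p : ℕ}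

theorem jacobian_eq_complexMatrix (ψ : (Fin p → ℝ) → (Fin p → ℝ)) (x : Fin p → ℝ) :
    jacobian ψ x = complexMatrix (fderiv ℝ ψ x) :=
  rfl

theorem jacobian_comp {ψ φ : (Fin p → ℝ) → (Fin p → ℝ)} {x : Fin p → ℝ}
    (hψ : DifferentiableAt ℝ ψ (φ x)) (hφ : DifferentiableAt ℝ φ x) :
    jacobian (ψ ∘ φ) x = jacobian ψ (φ x) * jacobian φ x := by
  simp only [jacobian_eq_complexMatrix, fderiv_comp x hψ hφ, ← ContinuousLinearMap.mul_def, map_mul]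

theorem contDiffAt_jacobian {n m : WithTop ℕ∞} {ψ : (Fin p → ℝ) → (Fin p → ℝ)} {x : Fin p → ℝ}
    (hψ : ContDiffAt ℝ n ψ x) (hmn : m + 1 ≤ n) : ContDiffAt ℝ m (jacobian ψ) x := by
  have : jacobian ψ = complexMatrix.toLinearMap.toContinuousLinearMap ∘ fderiv ℝ ψ :=
    funext (jacobian_eq_complexMatrix ψ)
  rw [this]
  exact ContinuousLinearMap.contDiff _ |>.contDiffAt.comp x (hψ.fderiv_right hmn)

theorem isUnit_jacobian_of_leftInvOn {ψ ψinv : (Fin p → ℝ) → (Fin p → ℝ)}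
    {U V : Set (Fin p → ℝ)} (hU : IsOpen U) (hV : IsOpen V) (hψ : DifferentiableOn ℝ ψ U)
    (hψinv : DifferentiableOn ℝ ψinv V) (hmaps : Set.MapsTo ψ U V) (hleft : Set.LeftInvOn ψinv ψ U)
    {x : Fin p → ℝ} (hx : x ∈ U) : IsUnit (jacobian ψ x) := by
  have comp_eq_id : ψinv ∘ ψ =ᶠ[𝓝 x] id := Filter.eventually_of_mem (hU.mem_nhds hx) hleft
  have left_inv : jacobian ψinv (ψ x) * jacobian ψ x = 1 := by
    rw [← jacobian_comp (hψinv.differentiableAt (hV.mem_nhds (hmaps hx)))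
      (hψ.differentiableAt (hU.mem_nhds hx)), jacobian_eq_complexMatrix, comp_eq_id.fderiv_eq,
      fderiv_id]
    exact map_one _
  exact .of_mul_eq_one_right _ left_inv

theorem mcJac_eq_leftMaurerCartan (ψ : (Fin p → ℝ) → (Fin p → ℝ)) (x : Fin p → ℝ) :
    mcJac ψ x = leftMaurerCartan ℝ (jacobian ψ) x := by
  funext v
  rw [leftMaurerCartan_apply, mcJac, Matrix.nonsing_inv_eq_ringInverse]
  rfl

theorem mcJac_comp_fderiv {ψ φ : (Fin p → ℝ) → (Fin p → ℝ)} {x : Fin p → ℝ}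
    (hψ : ContDiffAt ℝ 2 ψ (φ x)) (hφ : DifferentiableAt ℝ φ x) :
    mcJac ψ (φ x) ∘ fderiv ℝ φ x = leftMaurerCartan ℝ (jacobian ψ ∘ φ) x := by
  have hJ := (contDiffAt_jacobian (m := 1) hψ (by norm_num)).differentiableAt one_ne_zero
  funext v
  simp [mcJac_eq_leftMaurerCartan, fderiv_comp x hJ hφ]

theorem wzJac_eq_traceWedge₃ (ψ : (Fin p → ℝ) → (Fin p → ℝ)) (x : Fin p → ℝ)
    (w : Fin 3 → (Fin p → ℝ)) :
    wzJac ψ x w = (1 / 3) * traceWedge₃ complexTrace (mcJac ψ x) (mcJac ψ x) (mcJac ψ x) w := by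
  simp [wzJac, traceWedge₃, alternatingSum, complexTrace, Units.smul_def]

theorem sigmaForm_eq_traceWedge {φ' φ : (Fin p → ℝ) → (Fin p → ℝ)} {x : Fin p → ℝ}
    (hφ' : ContDiffAt ℝ 2 φ' (φ x)) (hφ : DifferentiableAt ℝ φ x)
    (hx : IsUnit (jacobian φ x)) :
    sigmaForm φ' φ x = traceWedge complexTrace (rightMaurerCartan ℝ (jacobian φ) x)
      (leftMaurerCartan ℝ (jacobian φ' ∘ φ) x) := by
  rw [← traceWedge_conj complexTrace_mul_comm hx, ← leftMaurerCartan_eq_conj hx,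
    ← mcJac_eq_leftMaurerCartan, ← mcJac_comp_fderiv hφ' hφ, ← Matrix.nonsing_inv_eq_ringInverse]
  rfl

theorem mcJac_comp {ψ φ : (Fin p → ℝ) → (Fin p → ℝ)} {x : Fin p → ℝ}
    (hψ : ContDiffAt ℝ 1 ψ (φ x)) (hφ : ContDiffAt ℝ 1 φ x) :
    mcJac (ψ ∘ φ) x = leftMaurerCartan ℝ ((jacobian ψ ∘ φ) * jacobian φ) x := by
  have jacobian_eq : jacobian (ψ ∘ φ) =ᶠ[𝓝 x] (jacobian ψ ∘ φ) * jacobian φ := by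
    filter_upwards [hφ.eventually (by simp),
      hφ.continuousAt.eventually (hψ.eventually (by simp))] with y hφy hψy
    exact jacobian_comp (hψy.differentiableAt one_ne_zero) (hφy.differentiableAt one_ne_zero)
  rw [mcJac_eq_leftMaurerCartan, leftMaurerCartan_congr jacobian_eq]

theorem sigmaForm_eventuallyEq_traceWedge {φ' φ : (Fin p → ℝ) → (Fin p → ℝ)} {x : Fin p → ℝ}
    (hφ' : ContDiffAt ℝ 2 φ' (φ x)) (hφ : ContDiffAt ℝ 1 φ x) (hx : IsUnit (jacobian φ x)) :
    sigmaForm φ' φ =ᶠ[𝓝 x] fun y => traceWedge complexTrace (rightMaurerCartan ℝ (jacobian φ) y)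
      (leftMaurerCartan ℝ (jacobian φ' ∘ φ) y) := by
  have := hasSummableGeomSeries_complexMatrix (ι := Fin p)
  have isUnit_nearby : ∀ᶠ y in 𝓝 x, IsUnit (jacobian φ y) :=
    (contDiffAt_jacobian (m := 0) hφ (by norm_num)).continuousAt (Units.isOpen.mem_nhds hx)
  filter_upwards [hφ.eventually (by simp), hφ.continuousAt.eventually (hφ'.eventually (by simp)),
    isUnit_nearby] with y hφy hφ'y hy
  exact sigmaForm_eq_traceWedge hφ'y (hφy.differentiableAt one_ne_zero) hy

theorem traceWedge₃_mcJac_comp {φ φ' : (Fin p → ℝ) → (Fin p → ℝ)} {x : Fin p → ℝ}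
    (hφ : ContDiffAt ℝ 3 φ x) (hφ' : ContDiffAt ℝ 3 φ' (φ x))
    (hφx : IsUnit (jacobian φ x)) (hφ'x : IsUnit (jacobian φ' (φ x)))
    (w : Fin 3 → (Fin p → ℝ)) :
    traceWedge₃ complexTrace (mcJac (φ' ∘ φ) x) (mcJac (φ' ∘ φ) x) (mcJac (φ' ∘ φ) x) w =
      traceWedge₃ complexTrace (mcJac φ x) (mcJac φ x) (mcJac φ x) w +
        traceWedge₃ complexTrace (mcJac φ' (φ x)) (mcJac φ' (φ x)) (mcJac φ' (φ x))
          (fun j => fderiv ℝ φ x (w j)) +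
        3 • extDerivTwoForm ℝ (sigmaForm φ' φ) x w := by
  have := hasSummableGeomSeries_complexMatrix (ι := Fin p)
  have hφ₁ : ContDiffAt ℝ 1 φ x := hφ.of_le (by norm_num)
  have hφ'₂ : ContDiffAt ℝ 2 φ' (φ x) := hφ'.of_le (by norm_num)
  have hJφ : ContDiffAt ℝ (minSmoothness ℝ 2) (jacobian φ) x := by
    rw [minSmoothness_of_isRCLikeNormedField]
    exact contDiffAt_jacobian hφ (by norm_num)
  have hJφ' : ContDiffAt ℝ (minSmoothness ℝ 2) (jacobian φ' ∘ φ) x := by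
    rw [minSmoothness_of_isRCLikeNormedField]
    exact (contDiffAt_jacobian hφ' (by norm_num)).comp x (hφ.of_le (by norm_num))
  have pullback : traceWedge₃ complexTrace (mcJac φ' (φ x)) (mcJac φ' (φ x)) (mcJac φ' (φ x))
      (fun j => fderiv ℝ φ x (w j)) = traceWedge₃ complexTrace (mcJac φ' (φ x) ∘ fderiv ℝ φ x)
        (mcJac φ' (φ x) ∘ fderiv ℝ φ x) (mcJac φ' (φ x) ∘ fderiv ℝ φ x) w := rfl
  rw [pullback, mcJac_comp (hφ'₂.of_le one_le_two) hφ₁, mcJac_eq_leftMaurerCartan φ,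
    mcJac_comp_fderiv hφ'₂ (hφ₁.differentiableAt one_ne_zero),
    extDerivTwoForm_congr (sigmaForm_eventuallyEq_traceWedge hφ'₂ hφ₁ hφx)]
  exact traceWedge₃_leftMaurerCartan_mul complexTrace_mul_comm hJφ' hJφ hφ'x hφx w

theorem wzJac_cocycle_general {φ φ' : (Fin p → ℝ) → (Fin p → ℝ)} {x : Fin p → ℝ}
    (hφ : ContDiffAt ℝ 3 φ x) (hφ' : ContDiffAt ℝ 3 φ' (φ x))
    (hφx : IsUnit (jacobian φ x)) (hφ'x : IsUnit (jacobian φ' (φ x)))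
    (w : Fin 3 → (Fin p → ℝ)) :
    wzJac (φ' ∘ φ) x w
      = wzJac φ x w
        + wzJac φ' (φ x) (fun j => fderiv ℝ φ x (w j))
        + ∑ i : Fin 3, (-1 : ℂ) ^ (i : ℕ) *
            fderiv ℝ
              (fun y => sigmaForm φ' φ y (w (i.succAbove 0)) (w (i.succAbove 1)))
              x (w i) := by
  have dsigma_eq : ∑ i : Fin 3, (-1 : ℂ) ^ (i : ℕ) *
      fderiv ℝ (fun y => sigmaForm φ' φ y (w (i.succAbove 0)) (w (i.succAbove 1))) x (w i) =
      extDerivTwoForm ℝ (sigmaForm φ' φ) x w := by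
    simp only [extDerivTwoForm, zsmul_eq_mul, Int.cast_pow, Int.cast_neg, Int.cast_one]
  simp only [wzJac_eq_traceWedge₃, traceWedge₃_mcJac_comp hφ hφ' hφx hφ'x, dsigma_eq]
  ring

end Jacobian

theorem wzJac_cocycle {p : ℕ} (hp : 0 < p)
    {W W' W'' : Set (Fin p → ℝ)} (hW : IsOpen W) (hW' : IsOpen W') (hW'' : IsOpen W'')
    (φ φinv : (Fin p → ℝ) → (Fin p → ℝ))
    (hφ : ContDiffOn ℝ (⊤ : ℕ∞) φ W) (hφmaps : Set.MapsTo φ W W')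
    (hφinv : ContDiffOn ℝ (⊤ : ℕ∞) φinv W') (hφinvmaps : Set.MapsTo φinv W' W)
    (hφleft : ∀ x ∈ W, φinv (φ x) = x) (hφright : ∀ y ∈ W', φ (φinv y) = y)
    (φ' φ'inv : (Fin p → ℝ) → (Fin p → ℝ))
    (hφ' : ContDiffOn ℝ (⊤ : ℕ∞) φ' W') (hφ'maps : Set.MapsTo φ' W' W'')
    (hφ'inv : ContDiffOn ℝ (⊤ : ℕ∞) φ'inv W'') (hφ'invmaps : Set.MapsTo φ'inv W'' W')
    (hφ'left : ∀ x ∈ W', φ'inv (φ' x) = x) (hφ'right : ∀ y ∈ W'', φ' (φ'inv y) = y) :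
    ∀ x ∈ W, ∀ w : Fin 3 → (Fin p → ℝ),
      wzJac (φ' ∘ φ) x w
        = wzJac φ x w
          + wzJac φ' (φ x) (fun j => fderiv ℝ φ x (w j))
          + ∑ i : Fin 3, (-1 : ℂ) ^ (i : ℕ) *
              fderiv ℝ
                (fun y => sigmaForm φ' φ y (w (i.succAbove 0)) (w (i.succAbove 1)))
                x (w i) := by
  intro x hx w
  have three_le : (3 : WithTop ℕ∞) ≤ (⊤ : ℕ∞) := ENat.LEInfty.out
  exact wzJac_cocycle_general ((hφ.contDiffAt (hW.mem_nhds hx)).of_le three_le)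
    ((hφ'.contDiffAt (hW'.mem_nhds (hφmaps hx))).of_le three_le)
    (isUnit_jacobian_of_leftInvOn hW hW' (hφ.differentiableOn (by simp))
      (hφinv.differentiableOn (by simp)) hφmaps hφleft hx)
    (isUnit_jacobian_of_leftInvOn hW' hW'' (hφ'.differentiableOn (by simp))
      (hφ'inv.differentiableOn (by simp)) hφ'maps hφ'left (hφmaps hx)) w
end
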